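/- arXiv:2305.02953 — 4 statements merged into one kernel-verified Lean document; each statement's English description precedes it below -/
import Mathlib

section
/- A group H is strongly bounded if and only if for every sequence {Y_n}_{n ∈ ℕ} of subsets of H such that 𝒢(Y_n) ⊆ Y_{n+1} for all n and ⋃_{n ∈ ℕ} Y_n = H, there exists N ∈ ℕ with Y_N = H. -/
/-- `wordSet Y n` is the set `Y^{[n]}` of all products of length at most `n`
of elements of `Y` and their inverses. -/
def wordSet {H : Type*} [Group H] (Y : Set H) (n : ℕ) : Set H :=
  {h | ∃ m : ℕ, m ≤ n ∧ ∃ g : Fin m → H,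
    (∀ i, g i ∈ Y ∨ (g i)⁻¹ ∈ Y) ∧ h = (List.ofFn g).prod}

/-- A subgroup `K` of `G` is malnormal if `K ∩ gKg⁻¹ = {1}` for all `g ∉ K`. -/
def Malnormal {G : Type*} [Group G] (K : Subgroup G) : Prop :=
  ∀ g : G, g ∉ K → ∀ y : G, y ∈ K → g⁻¹ * y * g ∈ K → y = 1

/-- A group is strongly bounded if every action by isometries on a metric
space has bounded orbits. -/
def StronglyBounded (H : Type*) [Group H] : Prop :=
  ∀ (X : Type) (_ : MetricSpace X) (_ : MulAction H X),
    (∀ h : H, Isometry (fun x : X => h • x)) →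
    ∀ x : X, Bornology.IsBounded (MulAction.orbit H x)

/-- A group is Jónsson if every proper subgroup has strictly smaller cardinality. -/
def Jonsson (H : Type*) [Group H] : Prop :=
  ∀ K : Subgroup H, K ≠ ⊤ → Cardinal.mk K < Cardinal.mk H

section WordSet

variable {H : Type*} [Group H] {Y : Set H}

theorem one_mem_wordSet (n : ℕ) : (1 : H) ∈ wordSet Y n :=
  ⟨0, Nat.zero_le n, Fin.elim0, fun i => i.elim0, by simp⟩

theorem mem_wordSet_two_of_mem {a : H} (ha : a ∈ Y ∨ a⁻¹ ∈ Y) : a ∈ wordSet Y 2 :=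
  ⟨1, by norm_num, fun _ => a, fun _ => ha, by simp⟩

theorem mul_mem_wordSet_two {a b : H} (ha : a ∈ Y ∨ a⁻¹ ∈ Y) (hb : b ∈ Y ∨ b⁻¹ ∈ Y) :
    a * b ∈ wordSet Y 2 := by
  refine ⟨2, le_rfl, ![a, b], fun i => ?_, by simp⟩
  fin_cases i
  · exact ha
  · exact hb

/-- A set containing `1`, `Y`, `Y⁻¹` and all twofold products contains `wordSet Y 2`. -/
theorem wordSet_two_subset {Z : Set H} (h1 : (1 : H) ∈ Z)
    (ha : ∀ a : H, (a ∈ Y ∨ a⁻¹ ∈ Y) → a ∈ Z)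
    (hab : ∀ a b : H, (a ∈ Y ∨ a⁻¹ ∈ Y) → (b ∈ Y ∨ b⁻¹ ∈ Y) → a * b ∈ Z) :
    wordSet Y 2 ⊆ Z := by
  rintro _ ⟨m, hm, g, hg, rfl⟩
  interval_cases m
  · simpa using h1
  · simpa using ha _ (hg 0)
  · simpa using hab _ _ (hg 0) (hg 1)

end WordSet

section ChainLength

variable {H : Type*} [Group H] {Y : ℕ → Set H}

/-- The least index `n` such that both `g` and `g⁻¹` lie in `Y n`. -/
noncomputable def chainLength (Y : ℕ → Set H) (g : H) : ℕ :=
  sInf {n | g ∈ Y n ∧ g⁻¹ ∈ Y n}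

theorem chainLength_inv (g : H) : chainLength Y g⁻¹ = chainLength Y g := by
  simp only [chainLength, inv_inv, and_comm]

theorem chain_monotone (hY : ∀ n, wordSet (Y n) 2 ⊆ Y (n + 1)) : Monotone Y :=
  monotone_nat_of_le_succ fun n _ ha => hY n (mem_wordSet_two_of_mem (Or.inl ha))

theorem mem_chainLength (hY : ∀ n, wordSet (Y n) 2 ⊆ Y (n + 1))
    (hU : (⋃ n, Y n) = Set.univ) (g : H) :
    g ∈ Y (chainLength Y g) ∧ g⁻¹ ∈ Y (chainLength Y g) := by
  have hg : g ∈ ⋃ n, Y n := hU ▸ Set.mem_univ g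
  obtain ⟨n, hn⟩ := Set.mem_iUnion.1 hg
  exact Nat.sInf_mem (s := {n | g ∈ Y n ∧ g⁻¹ ∈ Y n})
    ⟨n + 1, hY n (mem_wordSet_two_of_mem (Or.inl hn)),
      hY n (mem_wordSet_two_of_mem (Or.inr (by simpa using hn)))⟩

theorem chainLength_mul_le (hY : ∀ n, wordSet (Y n) 2 ⊆ Y (n + 1))
    (hU : (⋃ n, Y n) = Set.univ) (a b : H) :
    chainLength Y (a * b) ≤ max (chainLength Y a) (chainLength Y b) + 1 := by
  have ha := chain_monotone hY (le_max_left (chainLength Y a) (chainLength Y b))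
    (mem_chainLength hY hU a).1
  have hb := chain_monotone hY (le_max_right (chainLength Y a) (chainLength Y b))
    (mem_chainLength hY hU b).1
  refine Nat.sInf_le ⟨hY _ (mul_mem_wordSet_two (Or.inl ha) (Or.inl hb)), hY _ ?_⟩
  rw [mul_inv_rev]
  exact mul_mem_wordSet_two (Or.inr (by simpa using hb)) (Or.inr (by simpa using ha))

open Classical in
/-- The left-invariant metric on `H` in which distinct points `a`, `b` are at distance
`chainLength Y (a⁻¹ * b) + 1`. -/
noncomputable abbrev chainMetricSpace (hY : ∀ n, wordSet (Y n) 2 ⊆ Y (n + 1))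
    (hU : (⋃ n, Y n) = Set.univ) : MetricSpace H where
  dist a b := if a = b then 0 else (chainLength Y (a⁻¹ * b) : ℝ) + 1
  dist_self a := by simp
  dist_comm a b := by
    have h : chainLength Y (b⁻¹ * a) = chainLength Y (a⁻¹ * b) := by
      rw [← chainLength_inv, mul_inv_rev, inv_inv]
    simp only [h, eq_comm]
  dist_triangle a b c := by
    have h := chainLength_mul_le hY hU (a⁻¹ * b) (b⁻¹ * c)
    rw [show a⁻¹ * b * (b⁻¹ * c) = a⁻¹ * c by group] at h
    have h' : chainLength Y (a⁻¹ * c) ≤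
        chainLength Y (a⁻¹ * b) + chainLength Y (b⁻¹ * c) + 1 := by omega
    have h'' : (chainLength Y (a⁻¹ * c) : ℝ) ≤
        chainLength Y (a⁻¹ * b) + chainLength Y (b⁻¹ * c) + 1 := by exact_mod_cast h'
    by_cases hab : a = b
    · subst hab; simp
    by_cases hbc : b = c
    · subst hbc; simp
    simp only [hab, hbc, if_false]
    split_ifs
    · positivity
    · linarith
  eq_of_dist_eq_zero {a b} h := by
    by_contra hab
    rw [if_neg hab] at h
    exact absurd h (by positivity)

end ChainLength

/-- The elements displacing a point by at most `2 ^ n` form a chain as in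
`stronglyBounded_iff_chain`. -/
theorem wordSet_displacement_subset {H X : Type*} [Group H] [MetricSpace X] [MulAction H X]
    (hiso : ∀ h : H, Isometry (fun x : X => h • x)) (x : X) (n : ℕ) :
    wordSet {h : H | dist x (h • x) ≤ 2 ^ n} 2 ⊆ {h : H | dist x (h • x) ≤ 2 ^ (n + 1)} := by
  have hpos : (0 : ℝ) < 2 ^ n := by positivity
  have hsymm : ∀ a : H, (a ∈ {h : H | dist x (h • x) ≤ 2 ^ n} ∨
      a⁻¹ ∈ {h : H | dist x (h • x) ≤ 2 ^ n}) → dist x (a • x) ≤ 2 ^ n := by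
    rintro a (ha | ha)
    · exact ha
    · have h := (hiso a).dist_eq x (a⁻¹ • x)
      simp only [smul_inv_smul] at h
      rw [dist_comm, h]
      exact ha
  refine wordSet_two_subset ?_ (fun a ha => ?_) (fun a b ha hb => ?_)
  · simp only [Set.mem_ofPred_eq, one_smul, dist_self]
    positivity
  · have := hsymm a ha
    simp only [Set.mem_ofPred_eq, pow_succ]
    linarith
  · have h1 := hsymm a ha
    have h2 := hsymm b hb
    have h3 := (hiso a).dist_eq x (b • x)
    have h4 := dist_triangle x (a • x) (a • b • x)
    simp only [Set.mem_ofPred_eq, pow_succ, mul_smul]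
    linarith

theorem stronglyBounded_iff_chain {H : Type} [Group H] :
    StronglyBounded H ↔
      ∀ Y : ℕ → Set H, (∀ n : ℕ, wordSet (Y n) 2 ⊆ Y (n + 1)) →
        (⋃ n : ℕ, Y n) = Set.univ → ∃ N : ℕ, Y N = Set.univ := by
  constructor
  · intro hH Y hY hU
    let _ := chainMetricSpace hY hU
    have hdist : ∀ a b : H, a ≠ b → dist a b = (chainLength Y (a⁻¹ * b) : ℝ) + 1 :=
      fun a b hab => if_neg hab
    have hiso : ∀ h : H, Isometry (fun x : H => h • x) := by
      refine fun h => Isometry.of_dist_eq fun a b => ?_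
      rcases eq_or_ne a b with rfl | hab
      · simp
      · rw [hdist a b hab, hdist _ _ (by simpa using hab)]
        simp [mul_assoc]
    obtain ⟨C, hC⟩ := Metric.isBounded_iff.1 (hH H inferInstance inferInstance hiso 1)
    obtain ⟨N, hN⟩ := exists_nat_ge C
    refine ⟨N + 1, Set.eq_univ_of_forall fun g => ?_⟩
    rcases eq_or_ne 1 g with rfl | hg
    · exact hY N (one_mem_wordSet 2)
    · have h := hC (MulAction.mem_orbit_self (1 : H)) (⟨g, by simp⟩ : g ∈ MulAction.orbit H (1 : H))
      rw [hdist 1 g hg, inv_one, one_mul] at h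
      have hle : (chainLength Y g : ℝ) ≤ ((N + 1 : ℕ) : ℝ) := by
        push_cast
        linarith
      exact chain_monotone hY (by exact_mod_cast hle) (mem_chainLength hY hU g).1
  · intro hH X _ _ hiso x
    obtain ⟨N, hN⟩ := hH (fun n => {h : H | dist x (h • x) ≤ 2 ^ n})
      (wordSet_displacement_subset hiso x) (Set.eq_univ_of_forall fun h => by
        obtain ⟨n, hn⟩ := pow_unbounded_of_one_lt (dist x (h • x)) one_lt_two
        exact Set.mem_iUnion.2 ⟨n, hn.le⟩)
    refine Metric.isBounded_closedBall (x := x) (r := 2 ^ N) |>.subset ?_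
    rintro _ ⟨h, rfl⟩
    rw [Metric.mem_closedBall, dist_comm]
    exact hN.ge (Set.mem_univ h)
end

section
/- Let H be a group such that the cardinality of H has uncountable cofinality. If for every subset Y ⊆ H with |Y| = |H| there exists a natural number n_Y such that H = Y^{[n_Y]}, then H is strongly bounded and Jónsson. -/
/-- A length function bounded by `c` on `Y` is bounded by `n * c` on `wordSet Y n`. -/
theorem le_mul_of_mem_wordSet {H : Type*} [Group H] {Y : Set H} {n : ℕ} {ℓ : H → ℝ} {c : ℝ}
    (hc : 0 ≤ c) (hone : ℓ 1 = 0) (hinv : ∀ h, ℓ h⁻¹ = ℓ h)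
    (hmul : ∀ g h, ℓ (g * h) ≤ ℓ g + ℓ h) (hY : ∀ h ∈ Y, ℓ h ≤ c) {h : H}
    (hh : h ∈ wordSet Y n) : ℓ h ≤ n * c := by
  obtain ⟨m, hm, g, hg, rfl⟩ := hh
  have key : ∀ l : List H, (∀ a ∈ l, ℓ a ≤ c) → ℓ l.prod ≤ l.length * c := by
    intro l
    induction l with
    | nil => simp [hone]
    | cons a l ih =>
      intro hl
      have h₁ := hl a (by simp)
      have h₂ := ih fun b hb => hl b (by simp [hb])
      have h₃ := hmul a l.prod
      rw [List.prod_cons, List.length_cons]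
      push_cast
      linarith
  have hword : ℓ (List.ofFn g).prod ≤ m * c := by
    have := key (List.ofFn g) fun a ha => by
      obtain ⟨i, rfl⟩ := (List.mem_ofFn' g a).1 ha
      rcases hg i with hi | hi
      · exact hY _ hi
      · rw [← hinv]
        exact hY _ hi
    simpa using this
  exact hword.trans (by gcongr)

/-- Words in elements of a subgroup stay in the subgroup. -/
theorem wordSet_subset_subgroup {H : Type*} [Group H] (K : Subgroup H) (n : ℕ) :
    wordSet (K : Set H) n ⊆ K := by
  rintro _ ⟨m, -, g, hg, rfl⟩
  refine K.list_prod_mem fun a ha => ?_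
  obtain ⟨i, rfl⟩ := (List.mem_ofFn' g a).1 ha
  exact (hg i).elim id fun hi => K.inv_mem_iff.1 hi

theorem bounded_generation_imp_stronglyBounded_jonsson {H : Type} [Group H]
    (hcof : Cardinal.aleph0 < (Cardinal.mk H).ord.cof)
    (hgen : ∀ Y : Set H, Cardinal.mk Y = Cardinal.mk H →
      ∃ n : ℕ, wordSet Y n = Set.univ) :
    StronglyBounded H ∧ Jonsson H := by
  constructor
  · intro X _ _ hiso x
    have hinf : Cardinal.aleph0 ≤ Cardinal.mk H :=
      hcof.le.trans (Ordinal.cof_ord_le _)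
    obtain ⟨N, hN⟩ := Cardinal.infinite_pigeonhole
      (fun h : H => ⌈dist (h • x) x⌉₊) hinf (by simpa using hcof)
    obtain ⟨n, hn⟩ := hgen _ hN
    refine Metric.isBounded_closedBall (x := x) (r := n * N) |>.subset ?_
    rintro _ ⟨h, rfl⟩
    refine Metric.mem_closedBall.2 (le_mul_of_mem_wordSet (ℓ := fun h : H => dist (h • x) x)
      N.cast_nonneg (by simp) (fun h => ?_) (fun g h => ?_) (fun h hh => ?_)
      (hn ▸ Set.mem_univ h))
    · have := (hiso h).dist_eq (h⁻¹ • x) x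
      simp only [smul_inv_smul] at this
      rw [← this, dist_comm]
    · have := (hiso g).dist_eq (h • x) x
      have htri := dist_triangle ((g * h) • x) (g • x) x
      rw [mul_smul] at htri ⊢
      linarith
    · exact (Nat.le_ceil _).trans_eq (congrArg Nat.cast hh)
  · intro K hK
    refine (Cardinal.mk_set_le (K : Set H)).lt_of_ne fun hcard => hK ?_
    obtain ⟨n, hn⟩ := hgen K hcard
    exact (Subgroup.eq_top_iff' K).2 fun h =>
      wordSet_subset_subgroup K n (hn ▸ Set.mem_univ h)
end

section
/- If E is a set of cardinality ℵ₁, then there exists a function J : E × E → E such that for every uncountable subset Z ⊆ E the image J(Z × Z) equals E. -/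
section TodorcevicColoring

open Set Cardinal

/-- In a linear order whose initial segments are countable, this says that `S` meets every closed
unbounded set consisting of the common accumulation points of countably many uncountable sets. -/
def MeetsAccumulationPoints {α : Type*} [LinearOrder α] (S : Set α) : Prop :=
  ∀ B : ℕ → Set α, (∀ k, ¬(B k).Countable) →
    ∃ δ ∈ S, (Iio δ).Nonempty ∧ ∀ k, ∀ γ < δ, ∃ b ∈ B k, γ < b ∧ b < δ

theorem MeetsAccumulationPoints.mono {α : Type*} [LinearOrder α] {S T : Set α}
    (hS : MeetsAccumulationPoints S) (hST : S ⊆ T) : MeetsAccumulationPoints T := by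
  intro B hB
  obtain ⟨δ, hδ, h⟩ := hS B hB
  exact ⟨δ, hST hδ, h⟩

theorem exists_mem_gt_of_not_countable {α : Type*} [LinearOrder α]
    (hI : ∀ a : α, (Iic a).Countable) {B : Set α} (hB : ¬B.Countable) (γ : α) :
    ∃ b ∈ B, γ < b := by
  by_contra! h
  exact hB ((hI γ).mono h)

theorem bddAbove_range_of_countable_Iic {α : Type*} [LinearOrder α] [Uncountable α]
    (hI : ∀ a : α, (Iic a).Countable) (f : ℕ → α) : BddAbove (range f) := by
  by_contra h
  refine not_countable_univ (α := α) ((countable_iUnion fun n => hI (f n)).mono fun x _ => ?_)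
  rw [not_bddAbove_iff] at h
  obtain ⟨_, ⟨n, rfl⟩, hn⟩ := h x
  exact mem_iUnion.2 ⟨n, hn.le⟩

theorem meetsAccumulationPoints_Ioi {α : Type*} [LinearOrder α] [WellFoundedLT α] [Uncountable α]
    (hI : ∀ a : α, (Iic a).Countable) (ξ : α) : MeetsAccumulationPoints (Ioi ξ) := by
  intro B hB
  choose b hbB hb using fun k => exists_mem_gt_of_not_countable hI (hB k)
  choose u hu using fun γ => bddAbove_range_of_countable_Iic hI fun k => b k γ
  have hbu : ∀ k γ, b k γ ≤ u γ := fun k γ => hu γ (mem_range_self k)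
  have hlt : ∀ γ, γ < u γ := fun γ => (hb 0 γ).trans_le (hbu 0 γ)
  let x : ℕ → α := fun i => u^[i] ξ
  have hx : ∀ i, x (i + 1) = u (x i) := fun i => Function.iterate_succ_apply' u i ξ
  obtain ⟨δ, hδ, hmin⟩ := wellFounded_lt.has_min (upperBounds (range x))
    (bddAbove_range_of_countable_Iic hI x)
  have hxδ : ∀ i, x i < δ := fun i =>
    (hlt (x i)).trans_le (hx i ▸ hδ (mem_range_self (i + 1)))
  refine ⟨δ, hxδ 0, ⟨ξ, hxδ 0⟩, fun k γ hγ => ?_⟩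
  have hγ' : γ ∉ upperBounds (range x) := fun h => hmin γ h hγ
  simp only [mem_upperBounds, forall_mem_range, not_forall, not_le] at hγ'
  obtain ⟨i, hi⟩ := hγ'
  exact ⟨b k (x i), hbB k _, hi.trans (hb k _), ((hbu k _).trans (hx i).ge).trans_lt (hxδ (i + 1))⟩

theorem exists_nat_injOn_Iic {α : Type*} [Preorder α] (hI : ∀ a : α, (Iic a).Countable) :
    ∃ e : α → α → ℕ, ∀ β, InjOn (e β) (Iic β) := by
  choose e he using fun β => countable_iff_exists_injOn.1 (hI β)
  exact ⟨e, he⟩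

theorem MeetsAccumulationPoints.exists_of_iUnion {α : Type*} [LinearOrder α] {S : ℕ → Set α}
    (hS : MeetsAccumulationPoints (⋃ n, S n)) : ∃ n, MeetsAccumulationPoints (S n) := by
  by_contra! h
  simp only [MeetsAccumulationPoints, not_forall] at h
  choose B hB hBS using h
  obtain ⟨δ, hδ, hne, hacc⟩ := hS (fun k => B k.unpair.1 k.unpair.2) fun k => hB _ _
  obtain ⟨n, hn⟩ := mem_iUnion.1 hδ
  refine hBS n ⟨δ, hn, hne, fun k => ?_⟩
  simpa using hacc (Nat.pair n k)

/-- An Ulam matrix argument. -/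
theorem exists_forall_meetsAccumulationPoints_preimage {α : Type*} [LinearOrder α]
    [WellFoundedLT α] (hα : #α = ℵ₁) (hI : ∀ a : α, (Iic a).Countable) :
    ∃ h : α → α, ∀ a, MeetsAccumulationPoints (h ⁻¹' {a}) := by
  have : Uncountable α := by
    rw [← aleph0_lt_mk_iff, hα]
    exact aleph0_lt_aleph_one
  obtain ⟨e, he⟩ := exists_nat_injOn_Iic hI
  let U : ℕ → α → Set α := fun n ξ => {β | ξ < β ∧ e β ξ = n}
  have hU : ∀ ξ, ∃ n, MeetsAccumulationPoints (U n ξ) := fun ξ =>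
    ((meetsAccumulationPoints_Ioi hI ξ).mono fun β hβ =>
      show β ∈ ⋃ n, U n ξ from mem_iUnion.2 ⟨e β ξ, hβ, rfl⟩).exists_of_iUnion
  choose n hn using hU
  obtain ⟨m, hm⟩ : ∃ m, ¬(n ⁻¹' {m}).Countable := by
    by_contra! h
    exact not_countable_univ (α := α)
      ((countable_iUnion h).mono fun ξ _ => mem_iUnion.2 ⟨n ξ, rfl⟩)
  obtain ⟨g⟩ : Nonempty (α ↪ (n ⁻¹' {m} : Set α)) := by
    rwa [← le_aleph0_iff_set_countable, ← lt_aleph_one_iff, not_lt, ← hα] at hm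
  have hdisj : ∀ β a a', β ∈ U m (g a) → β ∈ U m (g a') → a = a' := fun β a a' h h' =>
    g.injective (Subtype.ext (he β h.1.le h'.1.le (h.2.trans h'.2.symm)))
  classical
  refine ⟨fun β => if hβ : ∃ a, β ∈ U m (g a) then hβ.choose else β, fun a => ?_⟩
  have hga := hn (g a)
  rw [show n (g a) = m from (g a).2] at hga
  refine hga.mono fun β hβ => ?_
  have hex : ∃ a, β ∈ U m (g a) := ⟨a, hβ⟩
  simp only [mem_preimage, mem_singleton_iff, dif_pos hex]
  exact hdisj β _ _ hex.choose_spec hβ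

/-- In an uncountable set of reals, all but countably many points are split off infinitely often
from uncountably many others. -/
theorem exists_mem_gt_forall_exists_not_countable_split {α : Type*} [LinearOrder α]
    (hI : ∀ a : α, (Iic a).Countable) {r : α → ℕ → Bool} (hr : Function.Injective r)
    {Z : Set α} (hZ : ¬Z.Countable) (δ : α) :
    ∃ β ∈ Z, δ < β ∧ ∀ m, ∃ n ≥ m,
      ¬{a ∈ Z | (∀ i < n, r a i = r β i) ∧ r a n ≠ r β n}.Countable := by
  by_contra! h
  let P : (Σ n, Fin n → Bool) → Set α := fun p => {a ∈ Z | ∀ i : Fin p.1, r a i = p.2 i}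
  have hcov : Z ⊆ Iic δ ∪ ⋃ p ∈ {p | (P p).Countable}, P p := by
    intro β hβ
    rcases le_or_gt β δ with hβδ | hδβ
    · exact Or.inl hβδ
    refine Or.inr ?_
    obtain ⟨m, hm⟩ := h β hβ hδβ
    have hmP : (P ⟨m, fun i => r β i⟩).Countable := by
      refine ((countable_singleton β).union
        ((Set.to_countable (Ici m)).biUnion hm)).mono fun a ha => ?_
      refine or_iff_not_imp_left.2 fun hne => ?_
      have hne' : r a ≠ r β := fun h => hne (hr h)
      have hle : m ≤ PiNat.firstDiff (r a) (r β) :=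
        not_lt.1 fun hlt => PiNat.apply_firstDiff_ne hne' (ha.2 ⟨_, hlt⟩)
      exact mem_iUnion₂.2 ⟨PiNat.firstDiff (r a) (r β), hle, ha.1,
        fun i hi => PiNat.apply_eq_of_lt_firstDiff hi, PiNat.apply_firstDiff_ne hne'⟩
    exact mem_iUnion₂.2 ⟨⟨m, fun i => r β i⟩, hmP, hβ, fun i => rfl⟩
  have hC : (⋃ p ∈ {p | (P p).Countable}, P p).Countable :=
    (Set.to_countable {p | (P p).Countable}).biUnion fun p hp => hp
  exact hZ (((hI δ).union hC).mono hcov)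

theorem PiNat.firstDiff_eq_of_forall_lt {E : ℕ → Type*} {x y : ∀ n, E n} {n : ℕ}
    (hlt : ∀ i < n, x i = y i) (hn : x n ≠ y n) : PiNat.firstDiff x y = n := by
  refine le_antisymm (not_lt.1 fun h => hn (PiNat.apply_eq_of_lt_firstDiff h))
    (not_lt.1 fun h => ?_)
  exact PiNat.apply_firstDiff_ne (fun h => hn (congrFun h n)) (hlt _ h)

theorem exists_coloring_of_countable_Iic {α : Type*} [LinearOrder α] [WellFoundedLT α]
    (hα : #α = ℵ₁) (hI : ∀ a : α, (Iic a).Countable) :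
    ∃ J : α × α → α, ∀ Z : Set α, ¬Z.Countable → J '' (Z ×ˢ Z) = Set.univ := by
  obtain ⟨e, he⟩ := exists_nat_injOn_Iic hI
  obtain ⟨h, hh⟩ := exists_forall_meetsAccumulationPoints_preimage hα hI
  obtain ⟨r, hr⟩ : ∃ r : α → ℕ → Bool, Function.Injective r := by
    have hle : lift.{0} #α ≤ lift #(ℕ → Bool) := by
      simpa [hα] using aleph_one_le_continuum
    obtain ⟨r⟩ := lift_mk_le'.1 hle
    exact ⟨r, r.injective⟩
  let S : α × α → Set α := fun p =>
    {ξ | p.1 ≤ ξ ∧ ξ ≤ p.2 ∧ e p.2 ξ ≤ PiNat.firstDiff (r p.1) (r p.2)}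
  have hS : ∀ p, ∃ x, (S p).Nonempty → IsLeast (S p) x := by
    intro p
    by_cases hp : (S p).Nonempty
    · obtain ⟨x, hx, hmin⟩ := wellFounded_lt.has_min (S p) hp
      exact ⟨x, fun _ => ⟨hx, fun y hy => not_lt.1 (hmin y hy)⟩⟩
    · exact ⟨p.1, fun h => absurd h hp⟩
  choose F hF using hS
  refine ⟨fun p => h (F p), fun Z hZ => eq_univ_of_forall fun c => ?_⟩
  let P : (Σ n, Fin n → Bool) → Set α := fun p => {a ∈ Z | ∀ i : Fin p.1, r a i = p.2 i}
  have : Nonempty (Σ n, Fin n → Bool) := ⟨⟨0, Fin.elim0⟩⟩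
  obtain ⟨f, hf⟩ := exists_surjective_nat (Σ n, Fin n → Bool)
  classical
  obtain ⟨δ, hδc, ⟨γ₀, hγ₀⟩, hacc⟩ := hh c
    (fun k => if (P (f k)).Countable then Z else P (f k)) fun k => by
      split_ifs with hk
      exacts [hZ, hk]
  obtain ⟨β, hβ, hδβ, hsplit⟩ := exists_mem_gt_forall_exists_not_countable_split hI hr hZ δ
  obtain ⟨n, hn, hunc⟩ := hsplit (e β δ)
  have hfin : {ξ | ξ < δ ∧ e β ξ ≤ n}.Finite :=
    Set.Finite.of_finite_image ((finite_Iic n).subset (image_subset_iff.2 fun ξ hξ => hξ.2))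
      ((he β).mono fun ξ hξ => (hξ.1.trans hδβ).le)
  obtain ⟨γ, hγ, hmax⟩ := exists_max_image _ id (hfin.insert γ₀) (insert_nonempty _ _)
  have hγδ : γ < δ := hγ.elim (fun h => h ▸ hγ₀) fun h => h.1
  obtain ⟨k, hk⟩ := hf ⟨n + 1, fun i => if (i : ℕ) < n then r β i else !r β i⟩
  have hPk : P (f k) = {a ∈ Z | (∀ i < n, r a i = r β i) ∧ r a n ≠ r β n} := by
    ext a
    simp only [P, hk, Fin.forall_iff, mem_ofPred_eq, Nat.lt_succ_iff_lt_or_eq, or_imp, forall_and,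
      forall_eq, lt_irrefl, if_false, Bool.eq_not, ne_eq]
    simp +contextual
  obtain ⟨a, ha, hγa, haδ⟩ := hacc k γ hγδ
  rw [if_neg (hPk ▸ hunc), hPk] at ha
  have hdiff : PiNat.firstDiff (r a) (r β) = n := PiNat.firstDiff_eq_of_forall_lt ha.2.1 ha.2.2
  have hδS : δ ∈ S (a, β) := ⟨haδ.le, hδβ.le, hn.le.trans hdiff.ge⟩
  have hleast : IsLeast (S (a, β)) δ := by
    refine ⟨hδS, fun ξ hξ => not_lt.1 fun hlt => ?_⟩
    exact (hξ.1.trans (hmax ξ (Or.inr ⟨hlt, hξ.2.2.trans hdiff.le⟩))).not_gt hγa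
  refine ⟨(a, β), ⟨ha.1, hβ⟩, ?_⟩
  simp only [(hF (a, β) ⟨δ, hδS⟩).unique hleast]
  exact hδc

end TodorcevicColoring

theorem todorcevic_coloring (E : Type) (hE : Cardinal.mk E = Cardinal.aleph 1) :
    ∃ J : E × E → E, ∀ Z : Set E, ¬Z.Countable →
      J '' (Z ×ˢ Z) = Set.univ := by
  obtain ⟨_, _, h⟩ := Cardinal.exists_ord_eq_type_lt E
  refine exists_coloring_of_countable_Iic hE fun a => ?_
  rw [← Set.Iio_insert]
  refine Set.Countable.insert a (Cardinal.le_aleph0_iff_set_countable.1 ?_)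
  exact Cardinal.lt_aleph_one_iff.1 (hE ▸ Cardinal.mk_Iio_lt a h)
end

section
/- For every countably infinite group G there exists an infinite subset Y ⊆ G such that for every natural number n there is an element g ∈ G with g ∉ Y^{[n]}. -/
open scoped Classical in
/-- `EventuallyAvoids n r T g` says that `g ∉ (T ∪ {z₁, …, z_r})^{[n]}` for almost all `z₁`,
almost all `z₂`, …, almost all `z_r`, with respect to the hyperfilter on `G`. -/
def EventuallyAvoids {G : Type*} [Group G] [Infinite G] (n : ℕ) : ℕ → Finset G → G → Prop
  | 0, T, g => g ∉ wordSet (T : Set G) n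
  | r + 1, T, g => ∀ᶠ z in (Filter.hyperfilter G : Filter G), EventuallyAvoids n r (insert z T) g

/-- For all `T ⊆ Y` and `r` with `T.card + r ≤ n`, the element `g` is no word of length at most `n`
in the letters of `T` and `r` further generic letters. -/
def GenericallyAvoids {G : Type*} [Group G] [Infinite G] (n : ℕ) (Y : Finset G) (g : G) : Prop :=
  ∀ T ⊆ Y, ∀ r, T.card + r ≤ n → EventuallyAvoids n r T g

section

variable {G : Type*} [Group G]

theorem card_le_of_subset_wordSet (n c : ℕ) :
    ∃ N, ∀ T : Finset G, T.card ≤ c → ∀ s : Finset G, (∀ g ∈ s, g ∈ wordSet (T : Set G) n) →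
      s.card ≤ N := by
  classical
  refine ⟨Fintype.card (Σ m : Fin (n + 1), Fin m → Fin c × Bool), fun T hT s hs => ?_⟩
  let u : Fin c → G := fun i => T.toList.getD i 1
  have hu : ∀ x ∈ T, ∃ i, u i = x := by
    intro x hx
    obtain ⟨i, hi, rfl⟩ := List.mem_iff_getElem.1 (Finset.mem_toList.2 hx)
    refine ⟨⟨i, ?_⟩, ?_⟩
    · rw [Finset.length_toList] at hi
      omega
    · simp only [u]
      exact List.getD_eq_getElem _ _ hi
  let f : (Σ m : Fin (n + 1), Fin m → Fin c × Bool) → G := fun p =>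
    (List.ofFn fun i => if (p.2 i).2 then u (p.2 i).1 else (u (p.2 i).1)⁻¹).prod
  have hsub : s ⊆ Finset.univ.image f := by
    intro g hg
    obtain ⟨m, hm, w, hw, rfl⟩ := hs g hg
    have hletter : ∀ i, ∃ p : Fin c × Bool, (if p.2 then u p.1 else (u p.1)⁻¹) = w i := by
      intro i
      rcases hw i with h | h
      · obtain ⟨j, hj⟩ := hu _ (Finset.mem_coe.1 h)
        exact ⟨(j, true), by simpa using hj⟩
      · obtain ⟨j, hj⟩ := hu _ (Finset.mem_coe.1 h)
        exact ⟨(j, false), by simp [hj]⟩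
    choose p hp using hletter
    refine Finset.mem_image.2 ⟨⟨⟨m, by omega⟩, p⟩, Finset.mem_univ _, ?_⟩
    simp only [f, hp]
  exact (Finset.card_le_card hsub).trans Finset.card_image_le

theorem exists_card_le_of_mem_wordSet {Y : Set G} {n : ℕ} {g : G} (hg : g ∈ wordSet Y n) :
    ∃ T : Finset G, (T : Set G) ⊆ Y ∧ T.card ≤ n ∧ g ∈ wordSet (T : Set G) n := by
  classical
  obtain ⟨m, hm, w, hw, rfl⟩ := hg
  let v : Fin m → G := fun i => if w i ∈ Y then w i else (w i)⁻¹
  refine ⟨Finset.univ.image v, ?_, ?_, m, hm, w, fun i => ?_, rfl⟩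
  · intro x hx
    obtain ⟨i, -, rfl⟩ := Finset.mem_image.1 (Finset.mem_coe.1 hx)
    by_cases h : w i ∈ Y
    · simp [v, h]
    · simpa [v, h] using (hw i).resolve_left h
  · exact Finset.card_image_le.trans (by simpa using hm)
  · have hv : v i ∈ Finset.univ.image v := Finset.mem_image_of_mem _ (Finset.mem_univ i)
    by_cases h : w i ∈ Y
    · left
      simpa only [v, if_pos h] using Finset.mem_coe.2 hv
    · right
      simpa only [v, if_neg h] using Finset.mem_coe.2 hv

variable [Infinite G]

theorem card_le_of_not_eventuallyAvoids (n r : ℕ) :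
    ∀ c, ∃ N, ∀ T : Finset G, T.card ≤ c → ∀ s : Finset G,
      (∀ g ∈ s, ¬ EventuallyAvoids n r T g) → s.card ≤ N := by
  classical
  induction r with
  | zero =>
    intro c
    obtain ⟨N, hN⟩ := card_le_of_subset_wordSet (G := G) n c
    exact ⟨N, fun T hT s hs => hN T hT s fun g hg => not_not.1 (hs g hg)⟩
  | succ r ih =>
    intro c
    obtain ⟨N, hN⟩ := ih (c + 1)
    refine ⟨N, fun T hT s hs => ?_⟩
    have hev : ∀ᶠ z in (Filter.hyperfilter G : Filter G),
        ∀ g ∈ s, ¬ EventuallyAvoids n r (insert z T) g := by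
      rw [Filter.eventually_all_finset]
      intro g hg
      have := hs g hg
      rw [EventuallyAvoids, ← Ultrafilter.eventually_not] at this
      convert this
    obtain ⟨z, hz⟩ := hev.exists
    exact hN (insert z T) ((Finset.card_insert_le _ _).trans (by omega)) s hz

theorem finite_not_eventuallyAvoids (n r : ℕ) (T : Finset G) :
    {g | ¬ EventuallyAvoids n r T g}.Finite := by
  obtain ⟨N, hN⟩ := card_le_of_not_eventuallyAvoids (G := G) n r T.card
  by_contra h
  obtain ⟨s, hs, hcard⟩ := Set.Infinite.exists_subset_card_eq h (N + 1)
  have := hN T le_rfl s fun g hg => hs hg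
  omega

theorem exists_genericallyAvoids (n : ℕ) (Y : Finset G) : ∃ g, GenericallyAvoids n Y g := by
  have hfin : (⋃ T ∈ Y.powerset, ⋃ r ∈ Finset.range (n + 1),
      {g | ¬ EventuallyAvoids n r T g}).Finite :=
    Y.powerset.finite_toSet.biUnion fun T _ =>
      (Finset.range (n + 1)).finite_toSet.biUnion fun r _ => finite_not_eventuallyAvoids n r T
  obtain ⟨g, hg⟩ := hfin.exists_notMem
  refine ⟨g, fun T hT r hr => ?_⟩
  by_contra h
  refine hg (Set.mem_biUnion (Finset.mem_powerset.2 hT) (Set.mem_biUnion ?_ h))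
  exact Finset.mem_range.2 (by omega)

open scoped Classical in
theorem GenericallyAvoids.eventually_insert {n : ℕ} {Y : Finset G} {g : G}
    (h : GenericallyAvoids n Y g) :
    ∀ᶠ z in (Filter.hyperfilter G : Filter G), GenericallyAvoids n (insert z Y) g := by
  have hev : ∀ᶠ z in (Filter.hyperfilter G : Filter G), ∀ T ∈ Y.powerset,
      ∀ r ∈ Finset.range n, T.card + (r + 1) ≤ n → EventuallyAvoids n r (insert z T) g := by
    rw [Filter.eventually_all_finset]
    intro T hT
    rw [Filter.eventually_all_finset]
    intro r _
    by_cases hr : T.card + (r + 1) ≤ n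
    · have := h T (Finset.mem_powerset.1 hT) (r + 1) hr
      rw [EventuallyAvoids] at this
      exact this.mono fun z hz _ => hz
    · exact Filter.Eventually.of_forall fun z hz => absurd hz hr
  refine hev.mono fun z hz T hT r hr => ?_
  by_cases hzT : z ∈ T
  · have hcard := Finset.card_erase_add_one hzT
    have := hz (T.erase z) (Finset.mem_powerset.2 (Finset.subset_insert_iff.1 hT)) r
      (Finset.mem_range.2 (by omega)) (by omega)
    rwa [Finset.insert_erase hzT] at this
  · exact h T ((Finset.subset_insert_iff_of_notMem hzT).1 hT) r hr

theorem exists_ssuperset_genericallyAvoids (k : ℕ) (Y : Finset G) (g : ℕ → G)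
    (h : ∀ n < k, GenericallyAvoids n Y (g n)) :
    ∃ (Y' : Finset G) (g' : ℕ → G), (∀ n < k + 1, GenericallyAvoids n Y' (g' n)) ∧
      Y ⊂ Y' ∧ ∀ n < k, g' n = g n := by
  classical
  obtain ⟨a, ha⟩ := exists_genericallyAvoids k Y
  have hg : ∀ n ∈ Finset.range (k + 1), GenericallyAvoids n Y (Function.update g k a n) := by
    intro n hn
    rcases (Nat.lt_succ_iff_lt_or_eq.1 (Finset.mem_range.1 hn)) with hlt | rfl
    · rw [Function.update_of_ne hlt.ne]
      exact h n hlt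
    · rwa [Function.update_self]
  have hins := (Filter.eventually_all_finset (Finset.range (k + 1))).2
    fun n hn => (hg n hn).eventually_insert
  have hnew : ∀ᶠ z in (Filter.hyperfilter G : Filter G), z ∉ Y :=
    Filter.hyperfilter_le_cofinite Y.finite_toSet.compl_mem_cofinite
  obtain ⟨z, hz, hzY⟩ := (hins.and hnew).exists
  exact ⟨insert z Y, Function.update g k a, fun n hn => hz n (Finset.mem_range.2 hn),
    Finset.ssubset_insert hzY, fun n hn => Function.update_of_ne hn.ne _ _⟩

/-- Every infinite group, countable or not, has an infinite subset `Y` with `Y^{[n]} ≠ G` for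
all `n`. -/
theorem exists_infinite_forall_exists_notMem_wordSet :
    ∃ Y : Set G, Y.Infinite ∧ ∀ n : ℕ, ∃ g : G, g ∉ wordSet Y n := by
  choose! Y' g' hgen hss hext using exists_ssuperset_genericallyAvoids (G := G)
  let s : ℕ → Finset G × (ℕ → G) :=
    fun k => Nat.rec (∅, fun _ => 1) (fun k p => (Y' k p.1 p.2, g' k p.1 p.2)) k
  have hs : ∀ k, ∀ n < k, GenericallyAvoids n (s k).1 ((s k).2 n) := by
    intro k
    induction k with
    | zero => intro n hn; omega
    | succ k ih => exact hgen k _ _ ih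
  have hmono : StrictMono fun k => (s k).1 := strictMono_nat_of_lt_succ fun k => hss k _ _ (hs k)
  have hstable : ∀ n k, n + 1 ≤ k → (s k).2 n = (s (n + 1)).2 n := by
    intro n k hk
    induction k, hk using Nat.le_induction with
    | base => rfl
    | succ k hk ih => exact (hext k _ _ (hs k) n (by omega)).trans ih
  refine ⟨⋃ k, ((s k).1 : Set G), fun hfin => ?_, fun n => ⟨(s (n + 1)).2 n, fun hmem => ?_⟩⟩
  · refine Set.infinite_range_of_injective hmono.injective
      (hfin.toFinset.powerset.finite_toSet.subset ?_)
    rintro _ ⟨k, rfl⟩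
    refine Finset.mem_coe.2 (Finset.mem_powerset.2 fun x hx => ?_)
    exact hfin.mem_toFinset.2 (Set.mem_iUnion.2 ⟨k, hx⟩)
  · obtain ⟨T, hT, hcard, hword⟩ := exists_card_le_of_mem_wordSet hmem
    obtain ⟨k, hk⟩ := (Monotone.directed_le fun _ _ h =>
      Finset.coe_subset.2 (hmono.monotone h)).exists_mem_subset_of_finset_subset_biUnion hT
    have hTk : T ⊆ (s (max k (n + 1))).1 :=
      (Finset.coe_subset.1 hk).trans (hmono.monotone (le_max_left _ _))
    have := hs (max k (n + 1)) n (by omega) T hTk 0 (by omega)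
    rw [hstable n _ (le_max_right _ _)] at this
    exact this hword

end

theorem countable_group_not_uniformly_generated
    (G : Type) [Group G] [Countable G] [Infinite G] :
    ∃ Y : Set G, Y.Infinite ∧ ∀ n : ℕ, ∃ g : G, g ∉ wordSet Y n :=
  exists_infinite_forall_exists_notMem_wordSet
end
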